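/- For every integer k >= 0 and real x, the hyperharmonic polynomial satisfies HP_k(x) = (1/k!) * sum_{j=0}^{k} s1(k, j) * B_j(x), where s1(k,j) is the unsigned Stirling number of the first kind and B_j(x) is the j-th Bernoulli polynomial. -/

import Mathlib

/-!
Write `R_n = ascPochhammer n / n!` for the normalized rising factorial and let `L_x` be the linear
functional `X ^ j ↦ B_j(x)` on `ℝ[X]`.  Since the rising factorial is the generating polynomial of
the unsigned Stirling numbers (`ascPochhammer_coeff`), the right-hand side is `L_x R_k`.

The identity `∑_{j < n} C(n, j) B_j(x) = n x ^ (n - 1)` says that `L_x` turns forward differences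
into derivatives: `L_x (p(X + 1) - p(X)) = p'(x)` (`bernoulliFunctional_comp_sub`).  As `R_k` is the
forward difference of `R_{k+1}(X - 1)`, this gives `L_x R_k = R_{k+1}'(x - 1)`.

Finally `R_n' = ∑_{m < n} R_m / (n - m)` (`derivative_ascPochhammer_div`), which follows by
induction from `(n + 1) R_{n+1} = (X + n) R_n`; at `x - 1`, with `n = k + 1`, it is the defining sum
of `HP k x`.
-/

/-- `s1 n j` is the unsigned Stirling number of the first kind. -/
def s1 : ℕ → ℕ → ℕ
  | 0, 0 => 1
  | 0, _ + 1 => 0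
  | _ + 1, 0 => 0
  | n + 1, j + 1 => n * s1 n (j + 1) + s1 n j

/-- `gchoose x i` is the generalized binomial coefficient `C(x, i) = x(x-1)⋯(x-i+1)/i!`. -/
noncomputable def gchoose (x : ℝ) (i : ℕ) : ℝ :=
  (∏ t ∈ Finset.range i, (x - t)) / (i.factorial : ℝ)

/-- `HP k x` is the hyperharmonic polynomial `𝓗_k(x)`, with `HP k n = H_{k+1}^{(n-1)}`. -/
noncomputable def HP : ℕ → ℝ → ℝ
  | 0, _ => 1
  | 1, x => x - 1 / 2
  | (k + 2), x =>
      (1 / ((k : ℝ) + 2)) * (x - 1 / ((k : ℝ) + 3)) +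
        ∑ t ∈ Finset.Icc 1 (k + 1), gchoose (x + (k + 2) - t - 1) (k + 3 - t) * (1 / t)

open Polynomial Finset

theorem ascPochhammer_coeff (k j : ℕ) : (ascPochhammer ℝ k).coeff j = s1 k j := by
  induction k generalizing j with
  | zero => cases j <;> simp [s1, coeff_one]
  | succ k ih =>
    rw [ascPochhammer_succ_right, mul_add, coeff_add, ← C_eq_natCast, coeff_mul_C, ih]
    cases j with
    | zero =>
      cases k <;> simp [s1]
    | succ j =>
      rw [coeff_mul_X, ih]
      simp only [s1]
      push_cast
      ring

/-- The linear functional on real polynomials sending `X ^ j` to `B_j(x)`. -/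
noncomputable def bernoulliFunctional (x : ℝ) : ℝ[X] →ₗ[ℝ] ℝ :=
  Polynomial.lsum fun j =>
    LinearMap.id.smulRight (((Polynomial.bernoulli j).map (algebraMap ℚ ℝ)).eval x)

theorem bernoulliFunctional_monomial (x a : ℝ) (j : ℕ) :
    bernoulliFunctional x (monomial j a) =
      a * ((Polynomial.bernoulli j).map (algebraMap ℚ ℝ)).eval x := by
  simp [bernoulliFunctional, Polynomial.lsum_apply]

theorem bernoulliFunctional_ascPochhammer (k : ℕ) (x : ℝ) :
    bernoulliFunctional x (ascPochhammer ℝ k) =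
      ∑ j ∈ range (k + 1),
        (s1 k j : ℝ) * ((Polynomial.bernoulli j).map (algebraMap ℚ ℝ)).eval x := by
  conv_lhs => rw [(ascPochhammer ℝ k).as_sum_range, ascPochhammer_natDegree]
  simp only [map_sum, bernoulliFunctional_monomial, ascPochhammer_coeff]

theorem sum_choose_mul_bernoulli (n : ℕ) (x : ℝ) :
    ∑ j ∈ range (n + 1),
      ((n + 1).choose j : ℝ) * ((Polynomial.bernoulli j).map (algebraMap ℚ ℝ)).eval x =
        (n + 1) * x ^ n := by
  have h := congrArg (fun p : ℚ[X] => (p.map (algebraMap ℚ ℝ)).eval x)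
    (Polynomial.sum_bernoulli n)
  simp only [Polynomial.map_sum, eval_finsetSum, Polynomial.map_smul, Polynomial.map_monomial,
    eval_smul, eval_monomial] at h
  simpa using h

/-- The functional `X ^ j ↦ B_j(x)` turns forward differences into derivatives. -/
theorem bernoulliFunctional_comp_sub (x : ℝ) (p : ℝ[X]) :
    bernoulliFunctional x (p.comp (X + 1) - p) = (derivative p).eval x := by
  induction p using Polynomial.induction_on' with
  | add p q hp hq =>
    rw [add_comp, add_sub_add_comm, map_add, hp, hq, derivative_add, eval_add]
  | monomial n a =>
    cases n with
    | zero => simp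
    | succ n =>
      have h : (monomial (n + 1) a).comp (X + 1) - monomial (n + 1) a =
          ∑ j ∈ range (n + 1), monomial j (a * ((n + 1).choose j : ℝ)) := by
        rw [monomial_comp, add_pow, sum_range_succ, mul_add, ← C_mul_X_pow_eq_monomial]
        simp only [one_pow, mul_one, Nat.choose_self, Nat.cast_one, add_sub_cancel_right,
          mul_sum, ← C_mul_X_pow_eq_monomial, C_mul, C_eq_natCast]
        exact sum_congr rfl fun j _ => by ring
      rw [h, map_sum]
      simp only [bernoulliFunctional_monomial, mul_assoc, ← mul_sum]
      rw [sum_choose_mul_bernoulli]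
      simp
      ring

/-- The rising factorial of degree `k` is, up to the factor `k + 1`, the forward difference of the
shifted rising factorial of degree `k + 1`. -/
theorem bernoulliFunctional_ascPochhammer_eq_derivative (k : ℕ) (x : ℝ) :
    (k + 1) * bernoulliFunctional x (ascPochhammer ℝ k) =
      (derivative (ascPochhammer ℝ (k + 1))).eval (x - 1) := by
  have h := congrArg (fun p : ℝ[X] => p.comp (X - 1)) (ascPochhammer_succ_comp_X_add_one (S := ℝ) k)
  have e : ∀ p : ℝ[X], (p.comp (X + 1)).comp (X - 1) = p := fun p => by
    rw [comp_assoc]; simp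
  have e' : ∀ p : ℝ[X], (p.comp (X - 1)).comp (X + 1) = p := fun p => by
    rw [comp_assoc]; simp
  simp only [add_comp, smul_comp, e] at h
  have h2 := bernoulliFunctional_comp_sub x ((ascPochhammer ℝ (k + 1)).comp (X - 1))
  rw [e'] at h2
  nth_rewrite 1 [h] at h2
  rw [add_sub_cancel_left, map_nsmul, derivative_comp] at h2
  simpa using h2

/-- The coefficientwise form of differentiating `(1 - z) ^ (-y) = ∑ R_n(y) z ^ n` with respect to
`y`, where `R_n(y) = ascPochhammer n / n!`. -/
theorem derivative_ascPochhammer_div (n : ℕ) (y : ℝ) :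
    (derivative (ascPochhammer ℝ n)).eval y / n.factorial =
      ∑ m ∈ range n, (ascPochhammer ℝ m).eval y / m.factorial / ((n : ℝ) - m) := by
  induction n with
  | zero => simp
  | succ n ih =>
    have hR : ∀ m : ℕ, ((m : ℝ) + 1) * ((ascPochhammer ℝ (m + 1)).eval y / (m + 1).factorial) =
        (y + m) * ((ascPochhammer ℝ m).eval y / m.factorial) := fun m => by
      rw [ascPochhammer_succ_eval, Nat.factorial_succ]
      push_cast
      field_simp
    have hD : ((n : ℝ) + 1) *
        ((derivative (ascPochhammer ℝ (n + 1))).eval y / (n + 1).factorial) =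
        (ascPochhammer ℝ n).eval y / n.factorial +
          (y + n) * ((derivative (ascPochhammer ℝ n)).eval y / n.factorial) := by
      rw [ascPochhammer_succ_right, Nat.factorial_succ]
      simp
      field_simp
      ring
    set R : ℕ → ℝ := fun m => (ascPochhammer ℝ m).eval y / m.factorial with hRdef
    have hn : (n : ℝ) + 1 ≠ 0 := by positivity
    apply mul_left_cancel₀ hn
    rw [hD, ih, mul_sum, mul_sum]
    -- `(y + n) R_m = (m + 1) R_{m+1} + (n - m) R_m`
    have h1 : ∀ m ∈ range n, (y + n) * (R m / ((n : ℝ) - m)) =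
        ((m + 1 : ℕ) : ℝ) * R (m + 1) / (((n + 1 : ℕ) : ℝ) - (m + 1 : ℕ)) + R m := by
      intro m hm
      have hlt : (m : ℝ) < n := by exact_mod_cast mem_range.1 hm
      have hne : (n : ℝ) - m ≠ 0 := by linarith
      have := hR m
      push_cast
      rw [show ((n : ℝ) + 1 - (m + 1)) = n - m by ring, this]
      simp only [hRdef]
      field_simp
      ring
    -- `(n + 1) / (n + 1 - m) = 1 + m / (n + 1 - m)`
    have h2 : ∀ m ∈ range (n + 1), ((n : ℝ) + 1) * (R m / (((n + 1 : ℕ) : ℝ) - m)) =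
        (m : ℝ) * R m / (((n + 1 : ℕ) : ℝ) - m) + R m := by
      intro m hm
      have hlt : (m : ℝ) < (n + 1 : ℕ) := by exact_mod_cast mem_range.1 hm
      have hne : ((n + 1 : ℕ) : ℝ) - m ≠ 0 := by linarith
      push_cast at hne ⊢
      field_simp
      ring
    have h3 := sum_range_succ' (fun m : ℕ => (m : ℝ) * R m / (((n + 1 : ℕ) : ℝ) - m)) n
    have h4 := sum_range_succ R n
    rw [sum_congr rfl h1, sum_congr rfl h2, sum_add_distrib, sum_add_distrib, h3, h4]
    simp only [Nat.cast_zero, zero_mul, zero_div, add_zero]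
    simp only [hRdef]
    ring

theorem gchoose_eq_ascPochhammer (x : ℝ) (m : ℕ) :
    gchoose (x + m - 2) m = (ascPochhammer ℝ m).eval (x - 1) / m.factorial := by
  rw [gchoose, ← descPochhammer_eval_eq_prod_range, descPochhammer_eval_eq_ascPochhammer]
  congr 2
  ring

/-- The definition of `HP` reindexed by `m = k + 1 - t`, the lower index of the binomial coefficient.
For `k ≥ 2` the terms `m = 0, 1` make up the isolated summand `(x - 1 / (k + 1)) / k`. -/
theorem HP_eq_sum (k : ℕ) (x : ℝ) :
    HP k x = ∑ m ∈ range (k + 1),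
      (ascPochhammer ℝ m).eval (x - 1) / m.factorial / (((k + 1 : ℕ) : ℝ) - m) := by
  match k with
  | 0 => simp [HP]
  | 1 => simp [HP, sum_range_succ]; ring
  | k + 2 =>
    rw [HP, sum_range_succ', sum_range_succ', ← sum_range_reflect, range_eq_Ico,
      ← Finset.Ico_add_one_right_eq_Icc, sum_Ico_eq_sum_range]
    have h : ∀ i ∈ range (k + 1), gchoose (x + (k + 2) - ((1 + i : ℕ) : ℝ) - 1) (k + 3 - (1 + i)) *
        (1 / ((1 + i : ℕ) : ℝ)) =
        (ascPochhammer ℝ (k + 1 - 1 - i + 1 + 1)).eval (x - 1) /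
          (k + 1 - 1 - i + 1 + 1).factorial /
          (((k + 2 + 1 : ℕ) : ℝ) - (k + 1 - 1 - i + 1 + 1 : ℕ)) := by
      intro i hi
      obtain ⟨d, rfl⟩ := Nat.exists_eq_add_of_le (Nat.lt_succ_iff.1 (mem_range.1 hi))
      rw [show i + d + 1 - 1 - i + 1 + 1 = d + 2 by omega,
        show i + d + 3 - (1 + i) = d + 2 by omega, ← gchoose_eq_ascPochhammer]
      push_cast
      rw [mul_one_div]
      congr 1
      · congr 1; ring
      · ring
    rw [← range_eq_Ico, show k + 1 + 1 - 1 = k + 1 by omega, sum_congr rfl h]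
    have h2 : (k : ℝ) + 2 ≠ 0 := by positivity
    have h3 : (k : ℝ) + 3 ≠ 0 := by positivity
    have hlin : 1 / ((k : ℝ) + 2) * (x - 1 / (k + 3)) = (x - 1) / (k + 2) + 1 / (k + 3) := by
      field_simp
      ring
    rw [hlin]
    simp
    rw [show (k : ℝ) + 2 + 1 = k + 3 by ring]
    ring

theorem hyperharmonicPoly_eq_bernoulli (k : ℕ) (x : ℝ) :
    HP k x =
      (1 / (k.factorial : ℝ)) *
        ∑ j ∈ Finset.range (k + 1),
          (s1 k j : ℝ) * ((Polynomial.bernoulli j).map (algebraMap ℚ ℝ)).eval x := by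
  rw [HP_eq_sum, ← derivative_ascPochhammer_div, ← bernoulliFunctional_ascPochhammer_eq_derivative,
    bernoulliFunctional_ascPochhammer, Nat.factorial_succ]
  push_cast
  field_simp
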